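/- For any simplicial complex Δ that is not a simplex and any field K, the Stanley-Reisner ring K[Δ] has a 2-linear resolution if and only if Δ is a generalized tree. -/

import Mathlib

open MvPolynomial

variable {V : Type*} [DecidableEq V]

def IsSimplicialComplex (Δ : Set (Finset V)) : Prop :=
  (∀ v : V, ({v} : Finset V) ∈ Δ) ∧ ∀ F ∈ Δ, ∀ G ⊆ F, G ∈ Δ

noncomputable def srIdeal (K : Type*) [Field K] (Δ : Set (Finset V)) :
    Ideal (MvPolynomial V K) :=
  Ideal.span ((fun S : Finset V => ∏ v ∈ S, (X v : MvPolynomial V K)) '' {S | S ∉ Δ})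

/-- A generalized tree on the vertex set `W ⊆ V`: either a simplex on `W`, or obtained
from a generalized tree by adding a cone over one of its faces from a new vertex. -/
inductive IsGeneralizedTree : Finset V → Set (Finset V) → Prop
  | simplex (W : Finset V) : IsGeneralizedTree W {S | S ⊆ W}
  | cone (W : Finset V) (Δ : Set (Finset V)) (F : Finset V) (x : V)
      (hΔ : IsGeneralizedTree W Δ) (hF : F ∈ Δ) (hx : x ∉ W) :
      IsGeneralizedTree (insert x W) (Δ ∪ {S | S ⊆ insert x F})

/-- `K[Δ]` has a 2-linear resolution: there is a graded free resolution
`… → F₂ → F₁ → F₀ = R → K[Δ] → 0` in which `F₀ = R` (one generator in degree `0`) and,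
for `i ≥ 1`, `Fᵢ` is generated in degree `i + 1`; equivalently the entries of the matrix
of `F₁ → F₀` are homogeneous of degree `2` and all further matrices have entries
homogeneous of degree `1`. -/
def HasTwoLinearResolution (K : Type*) [Field K] (Δ : Set (Finset V)) : Prop :=
  ∃ (ι : ℕ → Type) (_ : ∀ i, Finite (ι i)) (u : Unique (ι 0))
    (d : ∀ i : ℕ, ((ι (i + 1) →₀ MvPolynomial V K) →ₗ[MvPolynomial V K]
      (ι i →₀ MvPolynomial V K)))
    (ε : ((ι 0 →₀ MvPolynomial V K) →ₗ[MvPolynomial V K]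
      (MvPolynomial V K ⧸ srIdeal K Δ))),
    ε (Finsupp.single u.default 1) = 1 ∧
    Function.Surjective ε ∧
    LinearMap.ker ε = LinearMap.range (d 0) ∧
    (∀ i : ℕ, LinearMap.ker (d i) = LinearMap.range (d (i + 1))) ∧
    (∀ (b : ι 1) (c : ι 0),
      ((d 0) (Finsupp.single b 1)) c ∈ homogeneousSubmodule V K 2) ∧
    (∀ (i : ℕ) (b : ι (i + 2)) (c : ι (i + 1)),
      ((d (i + 1)) (Finsupp.single b 1)) c ∈ homogeneousSubmodule V K 1)

section Kos
set_option linter.unusedSectionVars false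
set_option linter.unusedSimpArgs false
variable {V : Type*} [Fintype V] [DecidableEq V] {K : Type*} [Field K]

/-- number of elements of `T` before `v` -/
def kcnt (o : V → ℕ) (v : V) (T : Finset V) : ℕ := (T.filter (fun t => o t < o v)).card

lemma kcnt_insert (o : V → ℕ) (v u : V) (T : Finset V) (hu : u ∉ T) :
    kcnt o v (insert u T) = kcnt o v T + if o u < o v then 1 else 0 := by
  unfold kcnt
  rw [Finset.filter_insert]
  split_ifs with h
  · rw [Finset.card_insert_of_notMem (by simp [hu])]
  · simp

/-- the Koszul differential as a matrix -/
noncomputable def Kd (K : Type*) [Field K] (o : V → ℕ) :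
    Matrix (Finset V) (Finset V) (MvPolynomial V K) :=
  fun T S => ∑ v ∈ Tᶜ, if insert v T = S then (-1) ^ kcnt o v T * X v else 0

lemma Kd_mul {κ : Type*} (o : V → ℕ) (w : Matrix (Finset V) κ (MvPolynomial V K))
    (T : Finset V) (c : κ) :
    (Kd K o * w) T c = ∑ v ∈ Tᶜ, (-1) ^ kcnt o v T * X v * w (insert v T) c := by
  simp only [Matrix.mul_apply, Kd, Finset.sum_mul]
  rw [Finset.sum_comm]
  refine Finset.sum_congr rfl fun v _ => ?_
  simp [ite_mul]

/-- the sign rule -/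
lemma ksign {R : Type*} [CommRing R] (o : V → ℕ) (ho : Function.Injective o) (u v : V)
    (T : Finset V) (hu : u ∉ T) (hv : v ∉ T) (huv : u ≠ v) :
    ((-1) ^ kcnt o u (insert v T) * (-1) ^ kcnt o v T : R)
      = - ((-1) ^ kcnt o v (insert u T) * (-1) ^ kcnt o u T) := by
  rw [kcnt_insert o u v T hv, kcnt_insert o v u T hu]
  have : o u ≠ o v := fun h => huv (ho h)
  rcases lt_or_gt_of_ne this with h | h
  · simp [h, h.le.not_gt, pow_succ]; ring
  · simp [h, h.le.not_gt, pow_succ]; ring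

lemma Kd_mul_Kd (o : V → ℕ) (ho : Function.Injective o) : Kd K o * Kd K o = (0 : Matrix (Finset V) (Finset V) (MvPolynomial V K)) := by
  ext1 T S
  rw [Kd_mul]
  simp only [Kd, Finset.mul_sum, Matrix.zero_apply]
  rw [Finset.sum_sigma']
  refine Finset.sum_involution (fun p _ => ⟨p.2, p.1⟩) ?_ ?_ ?_ ?_
  · rintro ⟨u, v⟩ h
    simp only [Finset.mem_sigma, Finset.mem_compl, Finset.mem_insert, not_or] at h
    obtain ⟨hu, hvu, hv⟩ := h
    simp only [Finset.insert_comm u v T]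
    split_ifs
    · have := ksign (R := MvPolynomial V K) o ho u v T hu hv (Ne.symm hvu)
      linear_combination (X u * X v) * this
    · simp
  · rintro ⟨u, v⟩ h _ h2
    simp only [Finset.mem_sigma, Finset.mem_compl, Finset.mem_insert, not_or] at h
    simp only [Sigma.mk.injEq] at h2
    exact h.2.1 h2.1
  · rintro ⟨u, v⟩ h
    simp only [Finset.mem_sigma, Finset.mem_compl, Finset.mem_insert, not_or] at h ⊢
    exact ⟨h.2.2, fun h' => h.2.1 h'.symm, h.1⟩
  · rintro ⟨u, v⟩ h
    rfl

/-- division by a variable -/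
noncomputable def divX (v : V) : MvPolynomial V K →+ MvPolynomial V K where
  toFun p := p.divMonomial (Finsupp.single v 1)
  map_zero' := by ext; simp [coeff_divMonomial]
  map_add' p q := by ext; simp [coeff_divMonomial]

lemma coeff_divX (v : V) (p : MvPolynomial V K) (m : V →₀ ℕ) :
    coeff m (divX v p) = coeff (Finsupp.single v 1 + m) p := by
  simp [divX, coeff_divMonomial]

lemma divX_sign (v : V) (n : ℕ) (p : MvPolynomial V K) :
    divX v ((-1) ^ n * p) = (-1) ^ n * divX v p := by
  rcases neg_one_pow_eq_or (MvPolynomial V K) n with h | h <;> simp [h]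

lemma divX_X_self (v : V) (p : MvPolynomial V K) : divX v (X v * p) = p := by
  ext m
  rw [coeff_divX, coeff_X_mul]

lemma divX_X_ne (v u : V) (h : u ≠ v) (p : MvPolynomial V K) :
    divX v (X u * p) = X u * divX v p := by
  ext m
  rw [coeff_divX, coeff_X_mul', coeff_X_mul']
  have : u ∈ (Finsupp.single v 1 + m).support ↔ u ∈ m.support := by
    simp [Finsupp.single_apply, h.symm]
  simp only [this]
  split_ifs with h1
  · rw [coeff_divX]
    congr 1
    ext t
    simp only [Finsupp.coe_tsub, Pi.sub_apply, Finsupp.coe_add, Pi.add_apply, Finsupp.single_apply]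
    by_cases h2 : u = t
    · subst h2; simp [h.symm]
    · simp [h2]
  · rfl

/-- Koszul homotopy in direction `v` -/
noncomputable def kh {κ : Type*} (o : V → ℕ) (v : V) (w : Matrix (Finset V) κ (MvPolynomial V K)) :
    Matrix (Finset V) κ (MvPolynomial V K) :=
  fun T c => if v ∈ T then (-1) ^ kcnt o v (T.erase v) * divX v (w (T.erase v) c) else 0

lemma Kd_kh_notMem {κ : Type*} (o : V → ℕ) (v : V)
    (w : Matrix (Finset V) κ (MvPolynomial V K)) (T : Finset V) (c : κ) (hv : v ∉ T) :
    (Kd K o * kh o v w) T c = X v * divX v (w T c) := by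
  rw [Kd_mul, Finset.sum_eq_single v]
  · simp only [kh, Finset.mem_insert_self, if_true, Finset.erase_insert hv]
    have : ((-1 : MvPolynomial V K) ^ kcnt o v T) * (-1) ^ kcnt o v T = 1 := by
      rw [← mul_pow]; simp
    linear_combination (X v * divX v (w T c)) * this
  · intro u _ hu
    simp [kh, hu.symm, hv]
  · simp [hv]

lemma Kd_kh_mem {κ : Type*} (o : V → ℕ) (ho : Function.Injective o) (v : V)
    (w : Matrix (Finset V) κ (MvPolynomial V K)) (hw : Kd K o * w = 0)
    (T : Finset V) (c : κ) (hv : v ∈ T) :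
    (Kd K o * kh o v w) T c = w T c := by
  obtain ⟨S, hS, rfl⟩ : ∃ S, v ∉ S ∧ T = insert v S := ⟨T.erase v, by simp, by simp [hv]⟩
  have h0 : divX v ((Kd K o * w) S c) = 0 := by rw [hw]; simp
  rw [Kd_mul, map_sum] at h0
  have e : (Sᶜ : Finset V) = insert v (insert v S)ᶜ := by
    ext t; by_cases t = v <;> simp_all
  rw [e, Finset.sum_insert (by simp)] at h0
  rw [mul_assoc, divX_sign, divX_X_self] at h0
  rw [Kd_mul]
  have s1 : ((-1 : MvPolynomial V K) ^ kcnt o v S) * (-1) ^ kcnt o v S = 1 := by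
    rw [← mul_pow]; simp
  have key : ∑ u ∈ (insert v S)ᶜ, (-1) ^ kcnt o u (insert v S) * X u * kh o v w (insert u (insert v S)) c
      = - (-1) ^ kcnt o v S * ∑ u ∈ (insert v S)ᶜ, divX v ((-1) ^ kcnt o u S * X u * w (insert u S) c) := by
    rw [Finset.mul_sum]
    refine Finset.sum_congr rfl fun u hu => ?_
    simp only [Finset.mem_compl, Finset.mem_insert, not_or] at hu
    rw [mul_assoc _ (X u) (w (insert u S) c), divX_sign, divX_X_ne v u hu.1]
    have e2 : (insert u (insert v S)).erase v = insert u S := by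
      rw [Finset.insert_comm, Finset.erase_insert]
      simp only [Finset.mem_insert, not_or]
      exact ⟨fun h => hu.1 h.symm, hS⟩
    simp only [kh, Finset.mem_insert, true_or, or_true, if_true, e2]
    have := ksign (R := MvPolynomial V K) o ho u v S hu.2 hS hu.1
    have s2 : ((-1 : MvPolynomial V K) ^ kcnt o v (insert u S)) * (-1) ^ kcnt o v (insert u S) = 1 := by
      rw [← mul_pow]; simp
    linear_combination (X u * divX v (w (insert u S) c)) *
      ((-1) ^ kcnt o v S * (-1) ^ kcnt o v (insert u S) * this
        - (-1) ^ kcnt o u (insert v S) * (-1) ^ kcnt o v (insert u S) * s1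
        - (-1) ^ kcnt o v S * (-1) ^ kcnt o u S * s2)
  rw [key]
  linear_combination (- (-1) ^ kcnt o v S) * h0 + w (insert v S) c * s1

lemma X_divX_coeff (v : V) (p : MvPolynomial V K) (m : V →₀ ℕ) :
    coeff m (X v * divX v p) = if v ∈ m.support then coeff m p else 0 := by
  rw [coeff_X_mul']
  split_ifs with h
  · rw [coeff_divX, add_tsub_cancel_of_le]
    rw [Finsupp.single_le_iff]
    have := Finsupp.mem_support_iff.1 h
    omega
  · rfl

lemma koszul_step {κ : Type*} (o : V → ℕ) (ho : Function.Injective o)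
    (w : Matrix (Finset V) κ (MvPolynomial V K)) (hw : Kd K o * w = 0) (S : Finset V) :
    ∃ u : Matrix (Finset V) κ (MvPolynomial V K),
      (∀ T c, ∀ m : V →₀ ℕ, coeff m ((w - Kd K o * u) T c) =
        if Disjoint T S ∧ Disjoint m.support S then coeff m (w T c) else 0) := by
  induction S using Finset.induction_on with
  | empty => exact ⟨0, by simp⟩
  | insert v S hv ih =>
    obtain ⟨u, hu⟩ := ih
    set w' := w - Kd K o * u with hw'
    have hdw : Kd K o * w' = 0 := by
      rw [hw', Matrix.mul_sub, hw, ← Matrix.mul_assoc, Kd_mul_Kd o ho]; simp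
    refine ⟨u + kh o v w', fun T c m => ?_⟩
    have e : (w - Kd K o * (u + kh o v w')) T c = w' T c - (Kd K o * kh o v w') T c := by
      rw [Matrix.mul_add, ← sub_sub, ← hw']; rfl
    rw [e]
    by_cases hT : v ∈ T
    · rw [Kd_kh_mem o ho v w' hdw T c hT]
      simp [hT]
    · rw [Kd_kh_notMem o v w' T c hT, coeff_sub, X_divX_coeff, hu]
      by_cases hm : v ∈ m.support
      · simp [hm, hT]
      · simp only [Finset.disjoint_insert_right, hT, hm, not_false_eq_true, true_and, if_false, sub_zero]

lemma koszul_exact {κ : Type*} (o : V → ℕ) (ho : Function.Injective o)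
    (w : Matrix (Finset V) κ (MvPolynomial V K)) (hw : Kd K o * w = 0)
    (h0 : ∀ c, coeff 0 (w ∅ c) = 0) :
    ∃ u : Matrix (Finset V) κ (MvPolynomial V K), Kd K o * u = w := by
  obtain ⟨u, hu⟩ := koszul_step o ho w hw Finset.univ
  refine ⟨u, ?_⟩
  symm
  rw [← sub_eq_zero]
  ext T c m
  rw [hu]
  simp only [Matrix.zero_apply, coeff_zero, ite_eq_right_iff, and_imp]
  rintro hT hm
  have h1 : m = 0 := by
    rw [← Finset.top_eq_univ, disjoint_top] at hm
    simpa using hm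
  have h2 : T = ∅ := by
    rw [← Finset.top_eq_univ, disjoint_top] at hT
    simpa using hT
  subst h1 h2
  exact h0 c

end Kos

section Lin
variable {V : Type*} {K : Type*} [Field K]

/-- the entries are homogeneous of degree `k` -/
def MHom {α β : Type*} (k : ℕ) (D : Matrix α β (MvPolynomial V K)) : Prop :=
  ∀ a b, D a b ∈ homogeneousSubmodule V K k

lemma hc_mul (j k : ℕ) (p q : MvPolynomial V K) (hq : q ∈ homogeneousSubmodule V K k) :
    homogeneousComponent (j + k) (p * q) = homogeneousComponent j p * q := by
  conv_lhs => rw [← sum_homogeneousComponent p, Finset.sum_mul, map_sum]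
  have h : ∀ i, homogeneousComponent (j + k) (homogeneousComponent i p * q)
      = if j = i then homogeneousComponent i p * q else 0 := by
    intro i
    have : homogeneousComponent i p * q ∈ homogeneousSubmodule V K (i + k) :=
      IsHomogeneous.mul (homogeneousComponent_isHomogeneous i p) hq
    rw [homogeneousComponent_of_mem this]
    simp
  simp only [h]
  rw [Finset.sum_ite_eq]
  split_ifs with h1
  · rfl
  · rw [homogeneousComponent_eq_zero, zero_mul]
    simpa using h1

lemma hc_matmul {α β γ : Type*} [Fintype β] (j k : ℕ) (w : Matrix α β (MvPolynomial V K))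
    (D : Matrix β γ (MvPolynomial V K)) (hD : MHom k D) :
    (w * D).map (homogeneousComponent (j + k)) = (w.map (homogeneousComponent j)) * D := by
  ext1 a c
  simp only [Matrix.map_apply, Matrix.mul_apply, map_sum]
  exact Finset.sum_congr rfl fun b _ => hc_mul j k _ _ (hD b c)

lemma hc_matmul' {α β γ : Type*} [Fintype β] (j k : ℕ) (w : Matrix β γ (MvPolynomial V K))
    (D : Matrix α β (MvPolynomial V K)) (hD : MHom k D) :
    (D * w).map (homogeneousComponent (j + k)) = D * (w.map (homogeneousComponent j)) := by
  ext1 a c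
  simp only [Matrix.map_apply, Matrix.mul_apply, map_sum]
  refine Finset.sum_congr rfl fun b _ => ?_
  rw [mul_comm, hc_mul j k _ _ (hD a b), mul_comm]

lemma MHom.mul {α β γ : Type*} [Fintype β] {j k : ℕ} {A : Matrix α β (MvPolynomial V K)}
    {B : Matrix β γ (MvPolynomial V K)} (hA : MHom j A) (hB : MHom k B) : MHom (j + k) (A * B) := by
  intro a c
  rw [Matrix.mul_apply]
  exact Submodule.sum_mem _ fun b _ => IsHomogeneous.mul (hA a b) (hB b c)

lemma MHom.map_hc {α β : Type*} {j : ℕ} {A : Matrix α β (MvPolynomial V K)} (hA : MHom j A) :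
    A.map (homogeneousComponent j) = A := by
  ext1 a b
  exact homogeneousComponent_eq_self (hA a b)

/-- a linear resolution, all in matrix form (rows act) -/
structure LinRes (e : ℕ) (I : Ideal (MvPolynomial V K)) where
  ι : ℕ → Type
  ft : ∀ i, Fintype (ι i)
  un : Unique (ι 0)
  D : ∀ i, Matrix (ι (i + 1)) (ι i) (MvPolynomial V K)
  aug : ∀ r : ι 0 → MvPolynomial V K, r un.default ∈ I ↔ ∃ w, Matrix.vecMul w (D 0) = r
  ex : ∀ i (w : ι (i + 1) → MvPolynomial V K),
    Matrix.vecMul w (D i) = 0 ↔ ∃ u, Matrix.vecMul u (D (i + 1)) = w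
  hom0 : MHom e (D 0)
  hom1 : ∀ i, MHom 1 (D (i + 1))

/-- matrix form of exactness -/
lemma exMat {α β δ : Type*} [Fintype δ]
    (D' : Matrix δ β (MvPolynomial V K)) (P : (β → MvPolynomial V K) → Prop)
    (h : ∀ w : β → MvPolynomial V K, P w → ∃ u, Matrix.vecMul u D' = w)
    (W : Matrix α β (MvPolynomial V K)) (hW : ∀ a, P (W a)) : ∃ U : Matrix α δ (MvPolynomial V K), U * D' = W := by
  choose U hU using fun a => h (W a) (hW a)
  refine ⟨Matrix.of U, ?_⟩
  ext1 a b
  rw [Matrix.mul_apply_eq_vecMul]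
  exact congrFun (hU a) b

attribute [instance] LinRes.ft

namespace LinRes
variable {e : ℕ} {I : Ideal (MvPolynomial V K)}

lemma DD (A : LinRes e I) (i : ℕ) : A.D (i + 1) * A.D i = 0 := by
  ext1 a b
  rw [Matrix.mul_apply_eq_vecMul]
  have : Matrix.vecMul (A.D (i+1) a) (A.D i) = 0 := by
    rw [A.ex]
    classical
    exact ⟨Pi.single a 1, by rw [Matrix.single_one_vecMul]; rfl⟩
  rw [this]; rfl

lemma exM (A : LinRes e I) {α : Type*} (i : ℕ) (W : Matrix α (A.ι (i + 1)) (MvPolynomial V K))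
    (h : W * A.D i = 0) : ∃ U : Matrix α (A.ι (i + 1 + 1)) (MvPolynomial V K), U * A.D (i + 1) = W := by
  refine exMat _ (fun w => Matrix.vecMul w (A.D i) = 0) (fun w => (A.ex i w).1) W fun a => ?_
  rw [← Matrix.mul_apply_eq_vecMul, h]; rfl

lemma augM (A : LinRes e I) {α : Type*} (W : Matrix α (A.ι 0) (MvPolynomial V K))
    (h : ∀ a, W a A.un.default ∈ I) : ∃ U : Matrix α (A.ι 1) (MvPolynomial V K), U * A.D 0 = W :=
  exMat _ (fun w => w A.un.default ∈ I) (fun w => (A.aug w).1) W h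

end LinRes
end Lin

section Cone
variable {V : Type*} {K : Type*} [Field K]

namespace LinRes
variable {e : ℕ} {I J : Ideal (MvPolynomial V K)}

/-- degrees of the differentials -/
def cdeg (e : ℕ) : ℕ → ℕ
  | 0 => e
  | _ + 1 => 1

lemma homc (A : LinRes e I) : ∀ i, MHom (cdeg e i) (A.D i)
  | 0 => A.hom0
  | i + 1 => A.hom1 i

lemma homB (B : LinRes 1 J) : ∀ i, MHom 1 (B.D i)
  | 0 => B.hom0
  | i + 1 => B.hom1 i

/-- comparison map -/
lemma comparison (A : LinRes e I) (B : LinRes 1 J) (m : MvPolynomial V K)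
    (hm : m ∈ homogeneousSubmodule V K e) (hJ : ∀ r, r * m ∈ I ↔ r ∈ J) :
    ∃ Φ : ∀ i, Matrix (B.ι i) (A.ι i) (MvPolynomial V K),
      Φ 0 = (Matrix.of fun _ _ => m) ∧ (∀ i, Φ (i + 1) * A.D i = B.D i * Φ i) ∧ ∀ i, MHom (cdeg e i) (Φ i) := by
  let P : ∀ i, Matrix (B.ι i) (A.ι i) (MvPolynomial V K) → Prop := fun i Φ =>
    MHom (cdeg e i) Φ ∧ ∃ Ψ : Matrix (B.ι (i + 1)) (A.ι (i + 1)) (MvPolynomial V K),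
      Ψ * A.D i = B.D i * Φ
  have base : P 0 (Matrix.of fun _ _ => m) := by
    refine ⟨fun _ _ => hm, A.augM _ fun a => ?_⟩
    simp only [Matrix.mul_apply, Matrix.of_apply]
    rw [← Finset.sum_mul, hJ]
    let _ := B.un
    have : ∑ j, B.D 0 a j = B.D 0 a B.un.default := by
      rw [Finset.sum_eq_single B.un.default]
      · intro b _ hb; exact absurd (Unique.eq_default b) hb
      · intro h; exact absurd (Finset.mem_univ _) h
    rw [this, B.aug]
    classical
    exact ⟨Pi.single a 1, by rw [Matrix.single_one_vecMul]; rfl⟩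
  have step : ∀ i Φ, P i Φ → ∃ Φ', P (i + 1) Φ' ∧ Φ' * A.D i = B.D i * Φ := by
    rintro i Φ ⟨h1, Ψ, h2⟩
    have h3 : (Ψ.map (homogeneousComponent 1)) * A.D i = B.D i * Φ := by
      rw [← hc_matmul 1 (cdeg e i) _ _ (A.homc i), h2]
      exact MHom.map_hc (MHom.mul (B.homB i) h1)
    refine ⟨Ψ.map (homogeneousComponent 1), ⟨fun a b => homogeneousComponent_mem _ _, ?_⟩, h3⟩
    apply A.exM
    rw [Matrix.mul_assoc, h3, ← Matrix.mul_assoc, B.DD, Matrix.zero_mul]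
  choose! next hn1 hn2 using step
  let Φ : ∀ i, Matrix (B.ι i) (A.ι i) (MvPolynomial V K) := fun i =>
    Nat.rec (motive := fun i => Matrix (B.ι i) (A.ι i) (MvPolynomial V K)) (Matrix.of fun _ _ => m) (fun i φ => next i φ) i
  have hP : ∀ i, P i (Φ i) := by
    intro i
    induction i with
    | zero => exact base
    | succ i ih => exact hn1 i _ ih
  exact ⟨Φ, rfl, fun i => hn2 i _ (hP i), fun i => (hP i).1⟩

/-- index types of the cone -/
def coneι (ι ι' : ℕ → Type) : ℕ → Type
  | 0 => ι 0
  | i + 1 => ι (i + 1) ⊕ ι' i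

@[reducible] def coneFt (ι ι' : ℕ → Type) (h : ∀ i, Fintype (ι i)) (h' : ∀ i, Fintype (ι' i)) :
    ∀ i, Fintype (coneι ι ι' i)
  | 0 => h 0
  | i + 1 => @instFintypeSum _ _ (h (i + 1)) (h' i)

noncomputable def coneD (A : LinRes e I) (B : LinRes 1 J)
    (Φ : ∀ i, Matrix (B.ι i) (A.ι i) (MvPolynomial V K)) :
    ∀ i, Matrix (coneι A.ι B.ι (i + 1)) (coneι A.ι B.ι i) (MvPolynomial V K)
  | 0 => Matrix.fromRows (A.D 0) (Φ 0)
  | i + 1 => Matrix.fromBlocks (A.D (i + 1)) 0 (Φ (i + 1)) (- B.D i)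

lemma cone_ex_aux {a1 a0 a2 b1 b0 : Type} [Fintype a1] [Fintype a0] [Fintype a2] [Fintype b1] [Fintype b0]
    (D0 : Matrix a1 a0 (MvPolynomial V K)) (D1 : Matrix a2 a1 (MvPolynomial V K))
    (Φ0 : Matrix b0 a0 (MvPolynomial V K)) (Φ1 : Matrix b1 a1 (MvPolynomial V K))
    (δ : Matrix b1 b0 (MvPolynomial V K))
    (hΦ : Φ1 * D0 = δ * Φ0)
    (hD : ∀ w, Matrix.vecMul w D0 = 0 ↔ ∃ u, Matrix.vecMul u D1 = w)
    (P : (b0 → MvPolynomial V K) → Prop) (hP : ∀ w, P w ↔ ∃ v, Matrix.vecMul v δ = w)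
    (w : a1 ⊕ b0 → MvPolynomial V K)
    (hw : Matrix.vecMul w (Matrix.fromRows D0 Φ0) = 0 → P (w ∘ Sum.inr)) :
    Matrix.vecMul w (Matrix.fromRows D0 Φ0) = 0 ↔
      ∃ u, Matrix.vecMul u (Matrix.fromBlocks D1 0 Φ1 (-δ)) = w := by
  constructor
  · intro h
    obtain ⟨v, hv⟩ := (hP _).1 (hw h)
    rw [Matrix.vecMul_fromRows] at h
    have : Matrix.vecMul (w ∘ Sum.inl + Matrix.vecMul v Φ1) D0 = 0 := by
      rw [Matrix.add_vecMul, Matrix.vecMul_vecMul, hΦ, ← Matrix.vecMul_vecMul, hv, h]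
    obtain ⟨u, hu⟩ := (hD _).1 this
    refine ⟨Sum.elim u (-v), ?_⟩
    rw [Matrix.vecMul_fromBlocks]
    simp only [Sum.elim_comp_inl, Sum.elim_comp_inr, Matrix.vecMul_zero, zero_add, hu,
      Matrix.neg_vecMul, Matrix.vecMul_neg, neg_neg, hv, add_neg_cancel_right]
    exact Sum.elim_comp_inl_inr w
  · rintro ⟨u, rfl⟩
    rw [Matrix.vecMul_fromRows, Matrix.vecMul_fromBlocks]
    simp only [Sum.elim_comp_inl, Sum.elim_comp_inr, Matrix.vecMul_zero, zero_add,
      Matrix.add_vecMul, Matrix.vecMul_neg, Matrix.neg_vecMul, Matrix.vecMul_vecMul, hΦ]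
    rw [← Matrix.vecMul_vecMul, (hD _).2 ⟨_, rfl⟩]
    simp

/-- the mapping cone -/
lemma cone (A : LinRes e I) (B : LinRes 1 J) (m : MvPolynomial V K)
    (hm : m ∈ homogeneousSubmodule V K e) (hJ : ∀ r, r * m ∈ I ↔ r ∈ J) :
    Nonempty (LinRes e (I ⊔ Ideal.span {m})) := by
  obtain ⟨Φ, h0, h1, h2⟩ := comparison A B m hm hJ
  let _ := A.un
  let _ := B.un
  have hsum : ∀ v : B.ι 0 → MvPolynomial V K, Matrix.vecMul v (Φ 0) = fun _ => v B.un.default * m := by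
    intro v
    ext1 c
    rw [Matrix.vecMul, dotProduct, h0, Finset.sum_eq_single B.un.default]
    · rfl
    · intro b _ hb; exact absurd (Unique.eq_default b) hb
    · intro h; exact absurd (Finset.mem_univ _) h
  refine ⟨⟨coneι A.ι B.ι, coneFt A.ι B.ι A.ft B.ft, A.un, coneD A B Φ, ?_, ?_, ?_, ?_⟩⟩
  · intro r
    change A.ι 0 → MvPolynomial V K at r
    change r A.un.default ∈ _ ↔ ∃ w : A.ι 1 ⊕ B.ι 0 → MvPolynomial V K,
      Matrix.vecMul w (Matrix.fromRows (A.D 0) (Φ 0)) = r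
    constructor
    · intro h
      obtain ⟨y, hy, z, hz, hyz⟩ := Submodule.mem_sup.1 h
      obtain ⟨c, rfl⟩ := Ideal.mem_span_singleton'.1 hz
      obtain ⟨w, hw⟩ := (A.aug (fun _ => y)).1 hy
      refine ⟨Sum.elim w (fun _ => c), ?_⟩
      rw [Matrix.sumElim_vecMul_fromRows, hw, hsum]
      ext1 t
      rw [Unique.eq_default t]
      exact hyz
    · rintro ⟨w, rfl⟩
      rw [Matrix.vecMul_fromRows, hsum]
      refine Ideal.add_mem _ (Ideal.mem_sup_left ((A.aug _).2 ⟨_, rfl⟩)) (Ideal.mem_sup_right ?_)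
      exact Ideal.mul_mem_left _ _ (Ideal.mem_span_singleton_self m)
  · intro i
    cases i with
    | zero =>
      intro (w : A.ι 1 ⊕ B.ι 0 → MvPolynomial V K)
      refine cone_ex_aux (A.D 0) (A.D 1) (Φ 0) (Φ 1) (B.D 0) (h1 0) (A.ex 0)
        (fun v => v B.un.default ∈ J) B.aug w ?_
      intro h
      rw [Matrix.vecMul_fromRows, hsum] at h
      rw [← hJ]
      have h3 := congrFun h A.un.default
      have h4 := (A.aug _).2 ⟨w ∘ Sum.inl, rfl⟩
      have h5 : (w ∘ Sum.inr) B.un.default * m = - Matrix.vecMul (w ∘ Sum.inl) (A.D 0) A.un.default := by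
        rw [eq_neg_iff_add_eq_zero, add_comm]; exact h3
      rw [h5]
      exact neg_mem h4
    | succ i =>
      intro (w : A.ι (i + 1 + 1) ⊕ B.ι (i + 1) → MvPolynomial V K)
      have key := cone_ex_aux (A.D (i + 1)) (A.D (i + 1 + 1)) (Φ (i + 1)) (Φ (i + 1 + 1)) (B.D (i + 1))
        (h1 (i + 1)) (A.ex (i + 1)) (fun v => Matrix.vecMul v (B.D i) = 0) (B.ex i) w
      change Matrix.vecMul w (Matrix.fromBlocks (A.D (i + 1)) 0 (Φ (i + 1)) (- B.D i)) = 0 ↔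
        ∃ u, Matrix.vecMul u (Matrix.fromBlocks (A.D (i + 1 + 1)) 0 (Φ (i + 1 + 1)) (- B.D (i + 1))) = w
      have e1 : Matrix.vecMul w (Matrix.fromBlocks (A.D (i + 1)) 0 (Φ (i + 1)) (- B.D i)) = 0 ↔
          Matrix.vecMul w (Matrix.fromRows (A.D (i + 1)) (Φ (i + 1))) = 0 ∧
          Matrix.vecMul (w ∘ Sum.inr) (B.D i) = 0 := by
        rw [Matrix.vecMul_fromBlocks, Matrix.vecMul_fromRows]
        simp only [Matrix.vecMul_zero, zero_add, Matrix.vecMul_neg]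
        constructor
        · intro h
          exact ⟨funext fun t => congrFun h (Sum.inl t),
            funext fun t => neg_eq_zero.1 (congrFun h (Sum.inr t))⟩
        · rintro ⟨h, h'⟩
          rw [h, h']
          ext1 t
          cases t <;> simp
      constructor
      · intro h
        have h' := e1.1 h
        exact (key (fun _ => h'.2)).1 h'.1
      · rintro ⟨u, rfl⟩
        have h6 : Matrix.vecMul ((Matrix.vecMul u (Matrix.fromBlocks (A.D (i + 1 + 1)) 0 (Φ (i + 1 + 1)) (- B.D (i + 1)))) ∘ Sum.inr) (B.D i) = 0 := by
          rw [Matrix.vecMul_fromBlocks]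
          simp only [Sum.elim_comp_inr, Matrix.vecMul_zero, zero_add, Matrix.vecMul_neg, Matrix.neg_vecMul]
          rw [(B.ex i _).2 ⟨_, rfl⟩, neg_zero]
        exact e1.2 ⟨(key (fun _ => h6)).2 ⟨u, rfl⟩, h6⟩
  · rintro (a | b) c
    · exact A.hom0 a c
    · exact h2 0 b c
  · rintro i (a | b) (c | d)
    · exact A.hom1 i a c
    · exact Submodule.zero_mem _
    · exact h2 (i + 1) b c
    · exact Submodule.neg_mem _ (B.homB i b d)

/-- index types of the trivial resolution -/
def trivι : ℕ → Type
  | 0 => Unit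
  | _ + 1 => Empty

/-- finiteness of the index types of the trivial resolution -/
@[reducible] def trivFt : ∀ i, Fintype (trivι i)
  | 0 => (inferInstance : Fintype Unit)
  | _ + 1 => (inferInstance : Fintype Empty)

/-- the trivial resolution -/
lemma triv (e : ℕ) : Nonempty (LinRes e (⊥ : Ideal (MvPolynomial V K))) := by
  have em : ∀ i, IsEmpty (trivι (i + 1)) := fun i => (inferInstance : IsEmpty Empty)
  let _ := trivFt
  have hz : ∀ i (w : trivι (i + 1) → MvPolynomial V K) (D : Matrix (trivι (i + 1)) (trivι i) (MvPolynomial V K)),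
      Matrix.vecMul w D = 0 := by
    intro i w D
    ext1 t
    rw [Matrix.vecMul, dotProduct]
    exact Finset.sum_eq_zero fun a _ => (em i).elim a
  refine ⟨⟨trivι, trivFt, (inferInstance : Unique Unit), fun i => 0, ?_, ?_, ?_, ?_⟩⟩
  · intro r
    rw [Ideal.mem_bot]
    constructor
    · intro h
      refine ⟨0, ?_⟩
      rw [hz]
      ext1 t
      exact h.symm
    · rintro ⟨w, rfl⟩
      rw [hz]; rfl
  · intro i w
    constructor
    · intro _
      exact ⟨0, _root_.funext fun a => (em i).elim a⟩
    · intro _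
      exact hz _ _ _
  · exact fun a => (em 0).elim a
  · exact fun i a => (em (i + 1)).elim a

end LinRes
end Cone

section Conv
variable {V : Type*} [DecidableEq V] {K : Type*} [Field K]

lemma linRes_of_hasTwo (Δ : Set (Finset V)) (h : HasTwoLinearResolution K Δ) :
    Nonempty (LinRes 2 (srIdeal K Δ)) := by
  obtain ⟨ι, hf, u, d, ε, h1, h2, h3, h4, h5, h6⟩ := h
  let ft : ∀ i, Fintype (ι i) := fun i => Fintype.ofFinite _
  let eq : ∀ i, (ι i →₀ MvPolynomial V K) ≃ₗ[MvPolynomial V K] (ι i → MvPolynomial V K) :=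
    fun i => Finsupp.linearEquivFunOnFinite _ _ _
  let D : ∀ i, Matrix (ι (i + 1)) (ι i) (MvPolynomial V K) := fun i =>
    Matrix.of fun b c => d i (Finsupp.single b 1) c
  have hD : ∀ i (w : ι (i + 1) →₀ MvPolynomial V K), Matrix.vecMul (eq (i + 1) w) (D i) = eq i (d i w) := by
    intro i w
    induction w using Finsupp.induction_linear with
    | zero => simp
    | add f g hf hg => simp only [map_add, Matrix.add_vecMul, hf, hg]
    | single b r =>
      have e1 : Finsupp.single b r = r • Finsupp.single b (1 : MvPolynomial V K) := by simp
      rw [e1, map_smul, map_smul, map_smul, Matrix.smul_vecMul]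
      congr 1
      classical
      have : eq (i + 1) (Finsupp.single b 1) = Pi.single b 1 := by
        ext1 t
        simp [eq, Finsupp.single_apply, Pi.single_apply, eq_comm]
      rw [this, Matrix.single_one_vecMul]
      rfl
  have hε : ∀ r : ι 0 →₀ MvPolynomial V K, ε r = Ideal.Quotient.mk _ (r u.default) := by
    intro r
    have : r = r u.default • Finsupp.single u.default (1 : MvPolynomial V K) := by
      refine Finsupp.ext fun t => ?_
      rw [Unique.eq_default t]
      simp
    conv_lhs => rw [this, map_smul, h1]
    exact congrArg (Ideal.Quotient.mk _) (mul_one _)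
  refine ⟨⟨ι, ft, u, D, ?_, ?_, ?_, ?_⟩⟩
  · intro r
    obtain ⟨r, rfl⟩ := (eq 0).surjective r
    have : (eq 0) r u.default ∈ srIdeal K Δ ↔ r ∈ LinearMap.ker ε := by
      rw [LinearMap.mem_ker, hε, Ideal.Quotient.eq_zero_iff_mem]; rfl
    rw [this, h3, LinearMap.mem_range]
    constructor
    · rintro ⟨w, rfl⟩
      exact ⟨_, hD 0 w⟩
    · rintro ⟨w, hw⟩
      obtain ⟨w, rfl⟩ := (eq 1).surjective w
      rw [hD 0 w] at hw
      exact ⟨w, (eq 0).injective hw⟩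
  · intro i w
    obtain ⟨w, rfl⟩ := (eq (i + 1)).surjective w
    rw [hD i w, LinearEquiv.map_eq_zero_iff, ← LinearMap.mem_ker, h4, LinearMap.mem_range]
    constructor
    · rintro ⟨v, rfl⟩
      exact ⟨_, hD (i + 1) v⟩
    · rintro ⟨v, hv⟩
      obtain ⟨v, rfl⟩ := (eq (i + 1 + 1)).surjective v
      rw [hD (i + 1) v] at hv
      exact ⟨v, (eq (i + 1)).injective hv⟩
  · exact h5
  · exact h6

lemma hasTwo_of_linRes (Δ : Set (Finset V)) (A : LinRes 2 (srIdeal K Δ)) :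
    HasTwoLinearResolution K Δ := by
  let eq : ∀ i, (A.ι i →₀ MvPolynomial V K) ≃ₗ[MvPolynomial V K] (A.ι i → MvPolynomial V K) :=
    fun i => Finsupp.linearEquivFunOnFinite _ _ _
  let d : ∀ i, (A.ι (i + 1) →₀ MvPolynomial V K) →ₗ[MvPolynomial V K] (A.ι i →₀ MvPolynomial V K) :=
    fun i => (eq i).symm.toLinearMap ∘ₗ (A.D i).vecMulLinear ∘ₗ (eq (i + 1)).toLinearMap
  let ε : (A.ι 0 →₀ MvPolynomial V K) →ₗ[MvPolynomial V K] (MvPolynomial V K ⧸ srIdeal K Δ) :=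
    (Submodule.mkQ (srIdeal K Δ)) ∘ₗ Finsupp.lapply A.un.default
  have hd : ∀ i w, eq i (d i w) = Matrix.vecMul (eq (i + 1) w) (A.D i) := by
    intro i w
    simp [d]
  have hs : ∀ i b c, d i (Finsupp.single b 1) c = A.D i b c := by
    intro i b c
    have h1 : d i (Finsupp.single b 1) c = eq i (d i (Finsupp.single b 1)) c := rfl
    rw [h1, hd]
    classical
    have : eq (i + 1) (Finsupp.single b 1) = Pi.single b 1 := by
      ext1 t
      simp [eq, Finsupp.single_apply, Pi.single_apply, eq_comm]
    rw [this, Matrix.single_one_vecMul]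
    rfl
  refine ⟨A.ι, fun i => inferInstance, A.un, d, ε, ?_, ?_, ?_, ?_, ?_, ?_⟩
  · simp [ε]
  · intro y
    obtain ⟨r, rfl⟩ := Submodule.mkQ_surjective _ y
    exact ⟨Finsupp.single A.un.default r, by simp [ε]⟩
  · ext1 r
    have : r ∈ LinearMap.ker ε ↔ (eq 0) r A.un.default ∈ srIdeal K Δ := by
      simp [ε, eq, Ideal.Quotient.eq_zero_iff_mem]
    rw [this, A.aug, LinearMap.mem_range]
    constructor
    · rintro ⟨w, hw⟩
      obtain ⟨w, rfl⟩ := (eq 1).surjective w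
      exact ⟨w, (eq 0).injective (by rw [hd, hw])⟩
    · rintro ⟨w, rfl⟩
      exact ⟨_, (hd 0 w).symm⟩
  · intro i
    ext1 r
    rw [LinearMap.mem_ker, ← LinearEquiv.map_eq_zero_iff (eq i), hd, A.ex, LinearMap.mem_range]
    constructor
    · rintro ⟨w, hw⟩
      obtain ⟨w, rfl⟩ := (eq (i + 1 + 1)).surjective w
      exact ⟨w, (eq (i + 1)).injective (by rw [hd, hw])⟩
    · rintro ⟨w, rfl⟩
      exact ⟨_, (hd (i + 1) w).symm⟩
  · intro b c
    rw [hs]; exact A.hom0 b c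
  · intro i b c
    rw [hs]; exact A.hom1 i b c

end Conv

section Tree
variable {V : Type*} [DecidableEq V] {K : Type*} [Field K]

lemma mem_supp_mul_X {r : MvPolynomial V K} {v : V} {P : (V →₀ ℕ) → Prop} :
    (∀ m ∈ (r * X v).support, P m) ↔ ∀ m ∈ r.support, P (m + Finsupp.single v 1) := by
  rw [support_mul_X]
  simp

lemma varIdeal_lin (S : Set V) (hS : S.Finite) :
    Nonempty (LinRes 1 (Ideal.span (X '' S : Set (MvPolynomial V K)))) := by
  induction S, hS using Set.Finite.induction_on with
  | empty => simpa using LinRes.triv 1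
  | @insert v S hv _ ih =>
    obtain ⟨A⟩ := ih
    rw [Set.image_insert_eq, Set.insert_eq, Set.union_comm, Ideal.span_union]
    refine LinRes.cone A A (X v) (isHomogeneous_X K v) fun r => ?_
    rw [mem_ideal_span_X_image, mem_ideal_span_X_image, mem_supp_mul_X]
    refine forall₂_congr fun m _ => exists_congr fun i => and_congr_right fun hi => ?_
    have : v ≠ i := by rintro rfl; exact hv hi
    simp [Finsupp.single_apply, this]

/-- exponent of a pair -/
noncomputable def pexp (p : V × V) : V →₀ ℕ := Finsupp.single p.1 1 + Finsupp.single p.2 1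

/-- the ideal generated by a set of pairs -/
noncomputable def edgeIdeal (K : Type*) [Field K] (E : Set (V × V)) : Ideal (MvPolynomial V K) :=
  Ideal.span ((fun s => monomial s (1 : K)) '' (pexp '' E))

lemma mem_edgeIdeal {E : Set (V × V)} {r : MvPolynomial V K} :
    r ∈ edgeIdeal K E ↔ ∀ m ∈ r.support, ∃ p ∈ E, pexp p ≤ m := by
  rw [edgeIdeal, mem_ideal_span_monomial_image]
  simp

lemma monomial_pexp (p : V × V) : monomial (pexp p) (1 : K) = X p.1 * X p.2 := by
  simp [pexp, X, monomial_mul]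

lemma edgeIdeal_union (E E' : Set (V × V)) : edgeIdeal K (E ∪ E') = edgeIdeal K E ⊔ edgeIdeal K E' := by
  rw [edgeIdeal, Set.image_union, Set.image_union, Ideal.span_union]; rfl

lemma edge_step [Finite V] (E : Set (V × V)) (x p : V)
    (h : ∀ l i, (l, i) ∈ E → (l ≠ x ∧ l ≠ p ∧ ((l, x) ∈ E ∨ (l, p) ∈ E)) ∨ (l = x ∧ i ≠ x ∧ i ≠ p))
    (A : Nonempty (LinRes 2 (edgeIdeal K E))) : Nonempty (LinRes 2 (edgeIdeal K (E ∪ {(x, p)}))) := by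
  obtain ⟨A⟩ := A
  obtain ⟨B⟩ := varIdeal_lin (K := K) {l : V | (l, x) ∈ E ∨ (l, p) ∈ E ∨ (x, l) ∈ E} (Set.toFinite _)
  have e : edgeIdeal K {(x, p)} = Ideal.span {(X x * X p : MvPolynomial V K)} := by
    simp [edgeIdeal, monomial_pexp]
  rw [edgeIdeal_union, e]
  refine LinRes.cone A B (X x * X p) (IsHomogeneous.mul (isHomogeneous_X K x) (isHomogeneous_X K p)) fun r => ?_
  rw [mem_ideal_span_X_image, mem_edgeIdeal, ← mul_assoc, mem_supp_mul_X, mem_supp_mul_X]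
  refine forall₂_congr fun m _ => ?_
  constructor
  · rintro ⟨⟨l, i⟩, hli, hle⟩
    rcases h l i hli with ⟨h1, h2, h3⟩ | ⟨rfl, h1, h2⟩
    · refine ⟨l, by simp only [Set.mem_setOf_eq]; tauto, ?_⟩
      have := hle l
      simp [pexp, Finsupp.single_apply, h1.symm, h2.symm] at this
      omega
    · refine ⟨i, by simp only [Set.mem_setOf_eq]; tauto, ?_⟩
      have := hle i
      simp [pexp, Finsupp.single_apply, h1.symm, h2.symm] at this
      omega
  · rintro ⟨l, hl, hm⟩
    have hlm : Finsupp.single l 1 ≤ m := by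
      rw [Finsupp.single_le_iff]; omega
    rcases hl with hl | hl | hl
    · refine ⟨_, hl, ?_⟩
      exact (add_le_add hlm le_rfl).trans (le_add_of_nonneg_right zero_le)
    · refine ⟨_, hl, ?_⟩
      exact add_le_add (hlm.trans (le_add_of_nonneg_right zero_le)) le_rfl
    · refine ⟨_, hl, ?_⟩
      rw [pexp, add_comm]
      exact (add_le_add hlm le_rfl).trans (le_add_of_nonneg_right zero_le)

lemma gt_sub {W : Finset V} {Δ : Set (Finset V)} (h : IsGeneralizedTree W Δ) :
    ∀ S ∈ Δ, S ⊆ W := by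
  induction h with
  | simplex W => exact fun S hS => hS
  | cone W Δ F x h hF hx ih =>
    rintro S (hS | hS)
    · exact (ih S hS).trans (Finset.subset_insert _ _)
    · exact hS.trans (Finset.insert_subset_insert _ (ih F hF))

lemma gt_down {W : Finset V} {Δ : Set (Finset V)} (h : IsGeneralizedTree W Δ) :
    ∀ S ∈ Δ, ∀ T ⊆ S, T ∈ Δ := by
  induction h with
  | simplex W => exact fun S hS T hT => hT.trans hS
  | cone W Δ F x h hF hx ih =>
    rintro S (hS | hS) T hT
    · exact Or.inl (ih S hS T hT)
    · exact Or.inr (hT.trans hS)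

/-- the nonface ideal relative to a vertex set -/
noncomputable def srW (K : Type*) [Field K] (W : Finset V) (Δ : Set (Finset V)) :
    Ideal (MvPolynomial V K) :=
  Ideal.span ((fun S : Finset V => ∏ v ∈ S, (X v : MvPolynomial V K)) '' {S | S ⊆ W ∧ S ∉ Δ})

lemma gt_lin [Finite V] {W : Finset V} {Δ : Set (Finset V)} (h : IsGeneralizedTree W Δ) :
    ∀ E : Set (V × V), (∀ l i, (l, i) ∈ E → l ∉ W) →
      (∀ a ∈ W, ∀ b ∈ W, a ≠ b → ({a, b} : Finset V) ∉ Δ → ∀ l i, (l, i) ∈ E → (l, a) ∈ E ∨ (l, b) ∈ E) →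
      Nonempty (LinRes 2 (edgeIdeal K E)) → Nonempty (LinRes 2 (edgeIdeal K E ⊔ srW K W Δ)) := by
  induction h with
  | simplex W =>
    intro E _ _ hA
    have : srW K W {S | S ⊆ W} = ⊥ := by
      rw [srW, Ideal.span_eq_bot]
      rintro _ ⟨S, ⟨h1, h2⟩, rfl⟩
      exact absurd h1 h2
    rwa [this, sup_bot_eq]
  | cone W Δ F x hT hF hx ih =>
    intro E h1 h2 hA
    have hFW := gt_sub hT F hF
    have hne : ∀ p ∈ W, p ≠ x := by rintro p hp rfl; exact hx hp
    have hxp : ∀ p ∈ W, p ∉ F → ({x, p} : Finset V) ∉ Δ ∪ {S | S ⊆ insert x F} := by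
      rintro p hp hpF (h | h)
      · exact hx (gt_sub hT _ h (by simp))
      · have : p ∈ insert x F := h (by simp)
        simp only [Finset.mem_insert] at this
        exact this.elim (hne p hp) hpF
    have key : ∀ Q : Finset V, Q ⊆ W \ F → Nonempty (LinRes 2 (edgeIdeal K (E ∪ {y | y.1 = x ∧ y.2 ∈ Q}))) := by
      intro Q
      induction Q using Finset.induction_on with
      | empty => intro _; simpa using hA
      | insert p Q hp ihQ =>
        intro hQ
        have hpW := hQ (Finset.mem_insert_self p Q)
        rw [Finset.mem_sdiff] at hpW
        have hQ' := (Finset.subset_insert p Q).trans hQ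
        have := edge_step _ x p ?_ (ihQ hQ')
        · convert this using 3
          ext ⟨a, b⟩
          simp only [Set.mem_union, Set.mem_setOf_eq, Finset.mem_insert, Set.mem_singleton_iff, Prod.mk.injEq]
          tauto
        · rintro l i (hE | ⟨rfl, hi⟩)
          · left
            have hl := h1 l i hE
            simp only [Finset.mem_insert, not_or] at hl
            refine ⟨hl.1, fun h => hl.2 (h ▸ hpW.1), ?_⟩
            have := h2 x (by simp) p (by simp [hpW.1]) (hne p hpW.1).symm (hxp p hpW.1 hpW.2) l i hE
            exact this.imp Or.inl Or.inl
          · right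
            have := Finset.mem_sdiff.1 (hQ' hi)
            refine ⟨rfl, hne i this.1, ?_⟩
            rintro rfl
            exact hp hi
    have fin := ih (E ∪ {y | y.1 = x ∧ y.2 ∈ W \ F}) ?_ ?_ (key _ subset_rfl)
    · convert fin using 2
      rw [edgeIdeal_union, sup_assoc]
      congr 1
      apply le_antisymm
      · rw [srW, Ideal.span_le]
        rintro _ ⟨S, ⟨hS1, hS2⟩, rfl⟩
        by_cases hxS : x ∈ S
        · have : ¬ S ⊆ insert x F := fun h => hS2 (Or.inr h)
          obtain ⟨p, hpS, hpF⟩ := Finset.not_subset.1 this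
          simp only [Finset.mem_insert, not_or] at hpF
          have hpW : p ∈ W := by
            have := hS1 hpS
            simp only [Finset.mem_insert] at this
            exact this.resolve_left hpF.1
          refine Ideal.mem_sup_left ?_
          have hd : (X x * X p : MvPolynomial V K) ∣ ∏ v ∈ S, X v := by
            rw [← Finset.prod_pair (Ne.symm hpF.1)]
            apply Finset.prod_dvd_prod_of_subset
            intro t ht
            simp only [Finset.mem_insert, Finset.mem_singleton] at ht
            rcases ht with rfl | rfl <;> assumption
          refine Ideal.mem_of_dvd _ hd ?_
          rw [← monomial_pexp (x, p)]
          exact Ideal.subset_span ⟨_, ⟨(x, p), ⟨rfl, by simp [hpW, hpF.2]⟩, rfl⟩, rfl⟩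
        · refine Ideal.mem_sup_right (Ideal.subset_span ⟨S, ⟨?_, fun h => hS2 (Or.inl h)⟩, rfl⟩)
          exact (Finset.subset_insert_iff_of_notMem hxS).1 hS1
      · refine sup_le ?_ ?_
        · rw [edgeIdeal, Ideal.span_le]
          rintro _ ⟨_, ⟨⟨a, p⟩, ⟨rfl, hp⟩, rfl⟩, rfl⟩
          simp only [Finset.mem_sdiff] at hp
          simp only [monomial_pexp]
          refine Ideal.subset_span ⟨{a, p}, ⟨?_, hxp p hp.1 hp.2⟩, Finset.prod_pair (hne p hp.1).symm⟩
          intro t ht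
          simp only [Finset.mem_insert, Finset.mem_singleton] at ht ⊢
          rcases ht with rfl | rfl
          · simp
          · exact Or.inr hp.1
        · apply Ideal.span_mono
          rintro _ ⟨S, ⟨hS1, hS2⟩, rfl⟩
          refine ⟨S, ⟨hS1.trans (Finset.subset_insert _ _), ?_⟩, rfl⟩
          rintro (h | h)
          · exact hS2 h
          · exact hS2 (gt_down hT F hF S ((Finset.subset_insert_iff_of_notMem (fun h => hx (hS1 h))).1 h))
    · rintro l i (hE | ⟨rfl, hi⟩)
      · exact fun h => h1 l i hE (by simp [h])
      · exact hx
    · intro a ha b hb hab hΔ l i hli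
      have hΔ' : ({a, b} : Finset V) ∉ Δ ∪ {S | S ⊆ insert x F} := by
        rintro (h | h)
        · exact hΔ h
        · refine hΔ (gt_down hT F hF _ ((Finset.subset_insert_iff_of_notMem ?_).1 h))
          simp only [Finset.mem_insert, Finset.mem_singleton, not_or]
          exact ⟨(hne a ha).symm, (hne b hb).symm⟩
      rcases hli with hE | ⟨rfl, hi⟩
      · exact (h2 a (by simp [ha]) b (by simp [hb]) hab hΔ' l i hE).imp Or.inl Or.inl
      · by_cases haF : a ∈ F
        · right; right
          refine ⟨rfl, ?_⟩
          simp only [Finset.mem_sdiff]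
          refine ⟨hb, fun hbF => hΔ (gt_down hT F hF _ ?_)⟩
          intro t ht
          simp only [Finset.mem_insert, Finset.mem_singleton] at ht
          rcases ht with rfl | rfl <;> assumption
        · left; right
          exact ⟨rfl, by simp [ha, haF]⟩

lemma hasTwo_of_gt [Fintype V] (Δ : Set (Finset V)) (h : IsGeneralizedTree Finset.univ Δ) :
    HasTwoLinearResolution K Δ := by
  have e0 : edgeIdeal K (∅ : Set (V × V)) = ⊥ := by simp [edgeIdeal]
  obtain ⟨A⟩ := gt_lin (K := K) h ∅ (by simp) (by simp) (by rw [e0]; exact LinRes.triv 2)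
  have e1 : edgeIdeal K (∅ : Set (V × V)) ⊔ srW K Finset.univ Δ = srIdeal K Δ := by
    rw [e0, bot_sup_eq, srW, srIdeal]
    simp
  rw [e1] at A
  exact hasTwo_of_linRes Δ A

end Tree

section Chase
variable {V : Type*} [Fintype V] [DecidableEq V] {K : Type*} [Field K]

lemma Kd_hom (o : V → ℕ) : MHom 1 (Kd K o) := by
  intro T S
  refine Submodule.sum_mem _ fun v _ => ?_
  split_ifs
  · rcases neg_one_pow_eq_or (MvPolynomial V K) (kcnt o v T) with h | h
    · rw [h, one_mul]; exact isHomogeneous_X K v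
    · rw [h, neg_one_mul]; exact Submodule.neg_mem _ (isHomogeneous_X K v)
  · exact Submodule.zero_mem _

lemma coeff0_of_hc {p : MvPolynomial V K} (h : homogeneousComponent 0 p = 0) : coeff 0 p = 0 := by
  rw [homogeneousComponent_zero] at h
  exact C_eq_zero.1 h

lemma coeff0_mul {α β γ : Type*} [Fintype β] {k : ℕ} (hk : k ≠ 0) (w : Matrix α β (MvPolynomial V K))
    (D : Matrix β γ (MvPolynomial V K)) (hD : MHom k D) (a : α) (c : γ) : coeff 0 ((w * D) a c) = 0 := by
  rw [Matrix.mul_apply, coeff_sum]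
  refine Finset.sum_eq_zero fun b _ => ?_
  have h0 : coeff 0 (D b c) = 0 := by
    apply coeff0_of_hc
    rw [homogeneousComponent_of_mem (hD b c), if_neg hk.symm]
  have := map_mul (constantCoeff (R := K) (σ := V)) (w a b) (D b c)
  simp only [constantCoeff_eq] at this
  rw [this, h0, mul_zero]

lemma zeroOut {α β γ : Type*} [Fintype β] (k : ℕ) (W : Matrix α β (MvPolynomial V K))
    (D : Matrix β γ (MvPolynomial V K)) (hD : MHom k D)
    (h : (W * D).map (homogeneousComponent k) = 0) :
    (W - W.map (homogeneousComponent 0)) * D = W * D ∧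
      (W - W.map (homogeneousComponent 0)).map (homogeneousComponent 0) = 0 := by
  constructor
  · rw [Matrix.sub_mul, ← hc_matmul 0 k W D hD, zero_add, h, sub_zero]
  · ext1 a b
    simp only [Matrix.map_apply, Matrix.sub_apply, map_sub, Matrix.zero_apply]
    rw [homogeneousComponent_eq_self (homogeneousComponent_isHomogeneous 0 _), sub_self]

lemma chase {e : ℕ} {I : Ideal (MvPolynomial V K)} (A : LinRes e I) (o : V → ℕ)
    (ho : Function.Injective o) (p : ℕ) :
    ∀ q (w : Matrix (Finset V) (A.ι (q + 1)) (MvPolynomial V K)),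
      (∀ T c, p < T.card → w T c = 0) → w.map (homogeneousComponent 0) = 0 →
      (Kd K o * w) * A.D q = 0 →
      ∃ (u : Matrix (Finset V) (A.ι (q + 1)) (MvPolynomial V K))
        (u' : Matrix (Finset V) (A.ι (q + 1 + 1)) (MvPolynomial V K)),
        w = Kd K o * u + u' * A.D (q + 1) := by
  induction p with
  | zero =>
    intro q w h1 h2 h3
    have : Kd K o * w = 0 := by
      ext1 T c
      rw [Kd_mul]
      refine Finset.sum_eq_zero fun v _ => ?_
      rw [h1 _ _ (Finset.card_pos.2 ⟨v, by simp⟩), mul_zero]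
    obtain ⟨u, hu⟩ := koszul_exact o ho w this fun c => coeff0_of_hc (congrFun (congrFun h2 ∅) c)
    exact ⟨u, 0, by simp [hu]⟩
  | succ p ih =>
    intro q w h1 h2 h3
    obtain ⟨W, hW⟩ := A.exM q _ h3
    have h4 : (W * A.D (q + 1)).map (homogeneousComponent 1) = 0 := by
      rw [hW]
      have := hc_matmul' 0 1 w (Kd K o) (Kd_hom o)
      rw [zero_add] at this
      rw [this, h2, Matrix.mul_zero]
    obtain ⟨h5, h6⟩ := zeroOut 1 W _ (A.hom1 q) h4
    set W1 := W - W.map (homogeneousComponent 0) with hW1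
    let W2 : Matrix (Finset V) (A.ι (q + 1 + 1)) (MvPolynomial V K) :=
      Matrix.of fun T c => if p < T.card then 0 else W1 T c
    have h7 : W2 * A.D (q + 1) = Kd K o * w := by
      rw [← hW, ← h5]
      ext1 T c
      by_cases hT : p < T.card
      · rw [h5, hW, Kd_mul, Matrix.mul_apply, Finset.sum_eq_zero, Finset.sum_eq_zero]
        · intro v hv
          rw [h1, mul_zero]
          rw [Finset.card_insert_of_notMem (by simpa using hv)]
          omega
        · intro b _
          simp [W2, hT]
      · simp only [Matrix.mul_apply, W2, Matrix.of_apply, hT, if_false]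
    have h8 : W2.map (homogeneousComponent 0) = 0 := by
      ext1 T c
      have := congrFun (congrFun h6 T) c
      simp only [Matrix.map_apply] at this ⊢
      simp only [W2, Matrix.of_apply]
      split_ifs
      · simp
      · exact this
    obtain ⟨u1, u2, hu⟩ := ih (q + 1) W2 (fun T c hT => by simp [W2, hT]) h8 (by
      rw [Matrix.mul_assoc, h7, ← Matrix.mul_assoc, Kd_mul_Kd o ho, Matrix.zero_mul])
    have h9 : Kd K o * (w - u1 * A.D (q + 1)) = 0 := by
      rw [Matrix.mul_sub, ← h7, hu, Matrix.add_mul, Matrix.mul_assoc u2, A.DD, Matrix.mul_zero,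
        add_zero, Matrix.mul_assoc, sub_self]
    obtain ⟨u, hu'⟩ := koszul_exact o ho _ h9 (by
      intro c
      rw [Matrix.sub_apply, coeff_sub, coeff0_mul one_ne_zero _ _ (A.hom1 q), sub_zero]
      exact coeff0_of_hc (congrFun (congrFun h2 ∅) c))
    exact ⟨u, u1, by rw [hu']; simp⟩

lemma chase_main {I : Ideal (MvPolynomial V K)} (A : LinRes 2 I) (o : V → ℕ)
    (ho : Function.Injective o) (z : Finset V → MvPolynomial V K)
    (hz0 : ∀ T, homogeneousComponent 0 (z T) = 0) (hz1 : ∀ T, homogeneousComponent 1 (z T) = 0)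
    (hz : ∀ T, ∑ v ∈ Tᶜ, (-1) ^ kcnt o v T * X v * z (insert v T) ∈ I) :
    ∃ y : Finset V → MvPolynomial V K,
      ∀ T, z T - ∑ v ∈ Tᶜ, (-1) ^ kcnt o v T * X v * y (insert v T) ∈ I := by
  let w : Matrix (Finset V) (A.ι 0) (MvPolynomial V K) := Matrix.of fun T _ => z T
  obtain ⟨W, hW⟩ := A.augM (Kd K o * w) (fun T => by rw [Kd_mul]; exact hz T)
  have h4 : (W * A.D 0).map (homogeneousComponent 2) = 0 := by
    rw [hW]
    have := hc_matmul' 1 1 w (Kd K o) (Kd_hom o)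
    have h' : w.map (homogeneousComponent 1) = 0 := by
      ext1 T c; exact hz1 T
    rw [h', Matrix.mul_zero] at this
    exact this
  obtain ⟨h5, h6⟩ := zeroOut 2 W _ A.hom0 h4
  set W1 := W - W.map (homogeneousComponent 0) with hW1
  obtain ⟨u1, u2, hu⟩ := chase A o ho (Fintype.card V) 0 W1
    (fun T c hT => absurd (Finset.card_le_univ T) (not_le.2 hT)) h6 (by
      rw [Matrix.mul_assoc, h5, hW, ← Matrix.mul_assoc, Kd_mul_Kd o ho, Matrix.zero_mul])
  have h9 : Kd K o * (w - u1 * A.D 0) = 0 := by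
    rw [Matrix.mul_sub, ← hW, ← h5, hu, Matrix.add_mul, Matrix.mul_assoc u2, A.DD, Matrix.mul_zero,
      add_zero, Matrix.mul_assoc, sub_self]
  obtain ⟨u, hu'⟩ := koszul_exact o ho _ h9 (by
    intro c
    rw [Matrix.sub_apply, coeff_sub, coeff0_mul two_ne_zero _ _ A.hom0, sub_zero]
    exact coeff0_of_hc (hz0 ∅))
  refine ⟨fun T => u T A.un.default, fun T => ?_⟩
  rw [← Kd_mul, hu']
  have : z T - (w - u1 * A.D 0) T A.un.default = (u1 * A.D 0) T A.un.default := by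
    simp [w]
  rw [this]
  rw [Matrix.mul_apply_eq_vecMul]
  exact (A.aug _).2 ⟨_, rfl⟩

/-- indicator exponent -/
noncomputable def ind (S : Finset V) : V →₀ ℕ := ∑ v ∈ S, Finsupp.single v 1

lemma ind_apply (S : Finset V) (t : V) : ind S t = if t ∈ S then 1 else 0 := by
  simp [ind, Finsupp.single_apply]

lemma prod_X_eq (S : Finset V) : (∏ v ∈ S, (X v : MvPolynomial V K)) = monomial (ind S) 1 := by
  simp only [X, ind, monomial_sum_one]

lemma ind_le {S T : Finset V} : ind S ≤ ind T ↔ S ⊆ T := by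
  constructor
  · intro h t ht
    have := h t
    by_contra hT
    simp [ind_apply, ht, hT] at this
  · intro h t
    rw [ind_apply, ind_apply]
    by_cases ht : t ∈ S
    · simp [ht, h ht]
    · simp [ht]

lemma mem_sr {Δ : Set (Finset V)} {r : MvPolynomial V K} :
    r ∈ srIdeal K Δ ↔ ∀ m ∈ r.support, ∃ S, S ∉ Δ ∧ ind S ≤ m := by
  have : srIdeal K Δ = Ideal.span ((fun s => monomial s (1 : K)) '' (ind '' {S | S ∉ Δ})) := by
    rw [srIdeal, Set.image_image]
    simp only [prod_X_eq]
  rw [this, mem_ideal_span_monomial_image]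
  simp

lemma flag_of_lin {Δ : Set (Finset V)} (hΔ : IsSimplicialComplex Δ) (A : LinRes 2 (srIdeal K Δ))
    (S : Finset V) (hS : S ∉ Δ) : ∃ p ∈ S, ∃ q ∈ S, p ≠ q ∧ ({p, q} : Finset V) ∉ Δ := by
  have h1 : monomial (ind S) (1 : K) ∈ srIdeal K Δ := by
    rw [mem_sr]
    intro m hm
    have := support_monomial_subset hm
    rw [Finset.mem_singleton] at this
    subst this
    exact ⟨S, hS, le_rfl⟩
  obtain ⟨w, hw⟩ := (A.aug (fun _ => monomial (ind S) 1)).1 h1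
  have h2 := congrArg (coeff (ind S)) (congrFun hw A.un.default)
  rw [coeff_monomial, if_pos rfl, Matrix.vecMul, dotProduct, coeff_sum] at h2
  obtain ⟨b, _, hb⟩ := Finset.exists_ne_zero_of_sum_ne_zero (h2.trans_ne one_ne_zero)
  rw [coeff_mul] at hb
  obtain ⟨⟨m, n⟩, hmn, hb⟩ := Finset.exists_ne_zero_of_sum_ne_zero hb
  rw [Finset.HasAntidiagonal.mem_antidiagonal] at hmn
  have hn := right_ne_zero_of_mul hb
  simp only at hn hmn
  have hD : A.D 0 b A.un.default ∈ srIdeal K Δ := by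
    refine (A.aug (A.D 0 b)).2 ?_
    classical
    exact ⟨Pi.single b 1, by rw [Matrix.single_one_vecMul]; rfl⟩
  obtain ⟨S', hS', hle⟩ := mem_sr.1 hD n (mem_support_iff.2 hn)
  have hdeg : n.degree = 2 := by
    by_contra hne
    exact hn (IsHomogeneous.coeff_eq_zero (A.hom0 b A.un.default) hne)
  have hnS : n ≤ ind S := by rw [← hmn]; exact le_add_of_nonneg_left zero_le
  have hsub : S' ⊆ S := ind_le.1 (hle.trans hnS)
  have hcard : S'.card ≤ 2 := by
    have h3 : (ind S').degree ≤ n.degree := Finsupp.degree_mono hle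
    have h4 : (ind S').degree = S'.card := by
      simp [ind]
    omega
  have hpos : 2 ≤ S'.card := by
    by_contra hlt
    have : S'.card = 0 ∨ S'.card = 1 := by omega
    rcases this with h | h
    · rw [Finset.card_eq_zero] at h
      subst h
      have : n ≠ 0 := by rintro rfl; simp at hdeg
      obtain ⟨v, _⟩ := Finsupp.ne_iff.1 this
      exact hS' (hΔ.2 _ (hΔ.1 v) _ (Finset.empty_subset _))
    · obtain ⟨v, rfl⟩ := Finset.card_eq_one.1 h
      exact hS' (hΔ.1 v)
  obtain ⟨p, q, hpq, rfl⟩ := Finset.card_eq_two.1 (le_antisymm hcard hpos)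
  exact ⟨p, hsub (by simp), q, hsub (by simp), hpq, hS'⟩

end Chase

section Comb
open Finset
variable {V : Type*} [DecidableEq V]
set_option linter.unusedSectionVars false

/-- separation property of a relation -/
def SepProp (adj : V → V → Prop) : Prop :=
  ∀ a b, adj a b → ∃ Q : V → Prop, Q a ∧ ¬ Q b ∧ ∀ u w, Q u → ¬ Q w → adj u w →
    ¬ (adj a u ∧ adj b u) → ¬ (adj a w ∧ adj b w) → u = a ∧ w = b

def Simplicial (adj : V → V → Prop) (U : Finset V) (x : V) : Prop :=
  ∀ y ∈ U, ∀ z ∈ U, adj x y → adj x z → y ≠ z → adj y z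

lemma exists_simplicial_aux {adj : V → V → Prop} (hs : ∀ u w, adj u w → adj w u)
    (hi : ∀ u, ¬ adj u u) (hsep : SepProp adj) (n : ℕ) : ∀ U : Finset V, U.card ≤ n →
    ∀ v ∈ U, (∃ w ∈ U, w ≠ v ∧ ¬ adj v w) → ∃ x ∈ U, x ≠ v ∧ ¬ adj v x ∧ Simplicial adj U x := by
  classical
  induction n with
  | zero =>
    intro U hU v hv
    simp at hU
    simp [hU] at hv
  | succ n ih =>
    intro U hU v hv ⟨w0, hw0, hw0v, hw0a⟩
    let N : Finset V := U.filter (fun w => w ≠ v ∧ ¬ adj v w)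
    let P : Finset V → Prop := fun C => C.Nonempty ∧ C ⊆ N ∧ ∀ c ∈ C, ∀ d ∈ N, adj c d → d ∈ C
    have hPN : P N := ⟨⟨w0, by simp [N, hw0, hw0v, hw0a]⟩, subset_rfl, fun c _ d hd _ => hd⟩
    obtain ⟨C, hC, hmin⟩ := exists_min_image (N.powerset.filter P) card
      ⟨N, by simp [hPN]⟩
    have hCP : P C := (mem_filter.1 hC).2
    obtain ⟨hCne, hCN, hCcl⟩ := hCP
    have hmin' : ∀ C' ⊆ C, P C' → C' = C := fun C' hsub hP =>
      eq_of_subset_of_card_le hsub (hmin C' (by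
        rw [mem_filter, mem_powerset]; exact ⟨hP.2.1, hP⟩))
    have hCU : ∀ c ∈ C, c ∈ U ∧ c ≠ v ∧ ¬ adj v c := fun c hc => by
      have := hCN hc
      simpa [N] using this
    let S : Finset V := U.filter (fun s => adj v s ∧ ∃ c ∈ C, adj s c)
    have hSclique : ∀ x ∈ S, ∀ y ∈ S, x ≠ y → adj x y := by
      intro x hx y hy hxy
      by_contra hnadj
      simp only [S, mem_filter] at hx hy
      obtain ⟨hxU, hvx, c', hc', hxc'⟩ := hx
      obtain ⟨hyU, hvy, c, hc, hyc⟩ := hy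
      obtain ⟨Q, hQv, hQx, hQ⟩ := hsep v x hvx
      have hyQ : Q y := by
        by_contra hyn
        have := hQ v y hQv hyn hvy (fun h => hi _ h.1) (fun h => hnadj h.2)
        exact hxy this.2.symm
      have hcQ : Q c := by
        by_contra hcn
        have := hQ y c hyQ hcn hyc (fun h => hnadj h.2) (fun h => (hCU c hc).2.2 h.1)
        rw [this.1] at hvy
        exact hi _ hvy
      have hc'Q : ¬ Q c' := by
        intro h
        have := hQ c' x h hQx (hs _ _ hxc') (fun h => (hCU c' hc').2.2 h.1) (fun h => hi _ h.2)
        exact (hCU c' hc').2.1 this.1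
      have hcl := hmin' (C.filter Q) (filter_subset _ _) ⟨⟨c, by simp [hc, hcQ]⟩,
        (filter_subset _ _).trans hCN, by
          intro d hd e he hde
          rw [mem_filter] at hd ⊢
          have heC := hCcl d hd.1 e he hde
          refine ⟨heC, ?_⟩
          by_contra hen
          have := hQ d e hd.2 hen hde (fun h => (hCU d hd.1).2.2 h.1)
            (fun h => (hCU e heC).2.2 h.1)
          exact (hCU d hd.1).2.1 this.1⟩
      rw [← hcl, mem_filter] at hc'
      exact hc'Q hc'.2
    have hSU : ∀ s ∈ S, s ∈ U ∧ adj v s := fun s h => by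
      simp only [S, mem_filter] at h; exact ⟨h.1, h.2.1⟩
    have hU' : C ∪ S ⊆ U := by
      intro t ht
      rcases mem_union.1 ht with h | h
      · exact (hCU t h).1
      · exact (hSU t h).1
    have hvU' : v ∉ C ∪ S := by
      intro ht
      rcases mem_union.1 ht with h | h
      · exact (hCU v h).2.1 rfl
      · exact hi _ (hSU v h).2
    have hcard : (C ∪ S).card ≤ n := by
      have : (C ∪ S).card < U.card := card_lt_card ⟨hU', fun h => hvU' (h hv)⟩
      omega
    have hnb : ∀ c ∈ C, ∀ t ∈ U, adj c t → t ∈ C ∪ S := by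
      intro c hc t ht hct
      rw [mem_union]
      by_cases hvt : adj v t
      · right
        simp only [S, mem_filter]
        exact ⟨ht, hvt, c, hc, hs _ _ hct⟩
      · left
        refine hCcl c hc t ?_ hct
        simp only [N, mem_filter]
        refine ⟨ht, ?_, hvt⟩
        rintro rfl
        exact (hCU c hc).2.2 (hs _ _ hct)
    suffices h : ∃ x ∈ C, Simplicial adj (C ∪ S) x by
      obtain ⟨x, hx, hsx⟩ := h
      exact ⟨x, (hCU x hx).1, (hCU x hx).2.1, (hCU x hx).2.2, fun y hy z hz hxy hxz =>
        hsx y (hnb x hx y hy hxy) z (hnb x hx z hz hxz) hxy hxz⟩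
    by_cases h1 : ∃ s ∈ S, ∃ w ∈ C ∪ S, w ≠ s ∧ ¬ adj s w
    · obtain ⟨s, hs', hw⟩ := h1
      obtain ⟨x, hx, hxs, hxa, hsx⟩ := ih (C ∪ S) hcard s (mem_union_right _ hs') hw
      refine ⟨x, ?_, hsx⟩
      rcases mem_union.1 hx with h | h
      · exact h
      · exact absurd (hSclique s hs' x h hxs.symm) hxa
    · push Not at h1
      by_cases h2 : ∃ c ∈ C, ∃ w ∈ C ∪ S, w ≠ c ∧ ¬ adj c w
      · obtain ⟨c, hc, hw⟩ := h2
        obtain ⟨x, hx, hxs, hxa, hsx⟩ := ih (C ∪ S) hcard c (mem_union_left _ hc) hw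
        refine ⟨x, ?_, hsx⟩
        rcases mem_union.1 hx with h | h
        · exact h
        · exact absurd (hs _ _ (h1 x h c (mem_union_left _ hc) hxs.symm)) hxa
      · push Not at h2
        obtain ⟨c, hc⟩ := hCne
        refine ⟨c, hc, fun y hy z hz _ _ hyz => ?_⟩
        rcases mem_union.1 hy with h | h
        · exact h2 y h z hz hyz.symm
        · exact h1 y h z hz hyz.symm

lemma exists_simplicial {adj : V → V → Prop} (hs : ∀ u w, adj u w → adj w u)
    (hi : ∀ u, ¬ adj u u) (hsep : SepProp adj) (U : Finset V) (hU : U.Nonempty) :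
    ∃ x ∈ U, Simplicial adj U x := by
  by_cases h : ∃ v ∈ U, ∃ w ∈ U, w ≠ v ∧ ¬ adj v w
  · obtain ⟨v, hv, hw⟩ := h
    obtain ⟨x, hx, _, _, h⟩ := exists_simplicial_aux hs hi hsep U.card U le_rfl v hv hw
    exact ⟨x, hx, h⟩
  · push Not at h
    obtain ⟨x, hx⟩ := hU
    exact ⟨x, hx, fun y hy z hz _ _ hyz => h y hy z hz hyz.symm⟩
end Comb

section Sep
variable {V : Type*} [Fintype V] [DecidableEq V] {K : Type*} [Field K]
set_option linter.unusedSectionVars false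

lemma kcnt_sdiff (o : V → ℕ) (W : Finset V) (p q : V) (hp : p ∈ W) (hq : q ∈ W) (hpq : p ≠ q) :
    kcnt o p W = kcnt o p (W \ {p, q}) + if o q < o p then 1 else 0 := by
  have h1 : W = insert p (insert q (W \ {p, q})) := by
    ext t
    simp only [Finset.mem_insert, Finset.mem_sdiff, Finset.mem_singleton]
    by_cases h : t = p
    · simp [h, hp]
    · by_cases h' : t = q
      · simp [h', hq]
      · simp [h, h']
  conv_lhs => rw [h1]
  rw [kcnt_insert _ _ _ _ (by simp [hpq]), kcnt_insert _ _ _ _ (by simp)]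
  simp

lemma sign_edge (o : V → ℕ) (ho : Function.Injective o) (W : Finset V) (p q : V) (hp : p ∈ W)
    (hq : q ∈ W) (hpq : p ≠ q) (gp gq : K) :
    (-1) ^ kcnt o p (W \ {p, q}) * gq + (-1) ^ kcnt o q (W \ {p, q}) * gp = 0 ↔
      (-1) ^ kcnt o p W * gp = (-1) ^ kcnt o q W * gq := by
  have h1 := kcnt_sdiff o W p q hp hq hpq
  have h2 := kcnt_sdiff o W q p hq hp hpq.symm
  rw [Finset.pair_comm q p] at h2
  rw [h1, h2]
  have hne : o p ≠ o q := fun h => hpq (ho h)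
  generalize kcnt o p (W \ {p, q}) = i
  generalize kcnt o q (W \ {p, q}) = j
  rcases neg_one_pow_eq_or K i with hi | hi <;> rcases neg_one_pow_eq_or K j with hj | hj <;>
  rcases lt_or_gt_of_ne hne with h | h <;>
  · simp only [h, not_lt_of_gt h, if_true, if_false, pow_add, pow_zero, pow_one, hi, hj]
    constructor <;> intro h <;> first | linear_combination h | linear_combination -h

lemma sr_coeff {Δ : Set (Finset V)} (hΔ : IsSimplicialComplex Δ) {r : MvPolynomial V K}
    (hr : r ∈ srIdeal K Δ) (F : Finset V) (hF : F ∈ Δ) : coeff (ind F) r = 0 := by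
  by_contra h
  obtain ⟨S, hS, hle⟩ := mem_sr.1 hr _ (mem_support_iff.2 h)
  exact hS (hΔ.2 F hF S (ind_le.1 hle))

lemma coeff_pair_sum (o : V → ℕ) (y : Finset V → MvPolynomial V K) (W : Finset V) (p q : V)
    (hp : p ∈ W) (hq : q ∈ W) (hpq : p ≠ q) :
    coeff (ind {p, q}) (∑ v ∈ (W \ {p, q})ᶜ, (-1) ^ kcnt o v (W \ {p, q}) * X v *
      y (insert v (W \ {p, q}))) =
    (-1) ^ kcnt o p (W \ {p, q}) * coeff (Finsupp.single q 1) (y (W.erase q)) +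
    (-1) ^ kcnt o q (W \ {p, q}) * coeff (Finsupp.single p 1) (y (W.erase p)) := by
  have hterm : ∀ (k : ℕ) (v : V) (f : MvPolynomial V K),
      coeff (ind {p, q}) ((-1) ^ k * X v * f) =
        (-1) ^ k * if v ∈ ({p, q} : Finset V) then
          coeff (ind {p, q} - Finsupp.single v 1) f else 0 := by
    intro k v f
    have : ((-1) ^ k * X v * f : MvPolynomial V K) = C ((-1) ^ k) * (X v * f) := by
      rw [C_pow, C_neg, C_1, mul_assoc]
    rw [this, coeff_C_mul, coeff_X_mul']
    congr 1
    have : v ∈ (ind ({p, q} : Finset V)).support ↔ v ∈ ({p, q} : Finset V) := by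
      rw [Finsupp.mem_support_iff, ind_apply]
      by_cases hv : v ∈ ({p, q} : Finset V) <;> simp only [hv, if_true, if_false] <;> simp
    simp only [this]
  rw [coeff_sum]
  simp only [hterm]
  have hsub : ({p, q} : Finset V) ⊆ (W \ {p, q})ᶜ := by
    intro t ht
    rw [Finset.mem_compl, Finset.mem_sdiff]
    exact fun h => h.2 ht
  rw [← Finset.sum_subset hsub (fun v _ hv => by rw [if_neg hv, mul_zero]),
    Finset.sum_pair hpq]
  have e1 : insert p (W \ {p, q}) = W.erase q := by
    ext t
    simp only [Finset.mem_insert, Finset.mem_sdiff, Finset.mem_singleton, Finset.mem_erase]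
    by_cases h : t = p
    · simp [h, hp, hpq]
    · simp [h, and_comm]
  have e2 : insert q (W \ {p, q}) = W.erase p := by
    ext t
    simp only [Finset.mem_insert, Finset.mem_sdiff, Finset.mem_singleton, Finset.mem_erase]
    by_cases h : t = q
    · simp [h, hq, hpq.symm]
    · simp [h, and_comm]
  have i0 : ind {p, q} = Finsupp.single p 1 + Finsupp.single q 1 := by
    rw [ind, Finset.sum_pair hpq]
  rw [e1, e2, if_pos (by simp), if_pos (by simp), i0, add_tsub_cancel_left, add_tsub_cancel_right]

lemma separation {Δ : Set (Finset V)} (hΔ : IsSimplicialComplex Δ) (A : LinRes 2 (srIdeal K Δ)) :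
    SepProp (fun u w : V => u ≠ w ∧ ({u, w} : Finset V) ∈ Δ) := by
  classical
  intro a b ⟨hab, habΔ⟩
  set adj : V → V → Prop := fun u w : V => u ≠ w ∧ ({u, w} : Finset V) ∈ Δ with hadj
  have hirr : ∀ u, ¬ adj u u := fun u h => h.1 rfl
  let W : Finset V := Finset.univ.filter (fun c => ¬ (adj a c ∧ adj b c))
  have hW : ∀ c, c ∈ W ↔ ¬ (adj a c ∧ adj b c) := fun c => by simp [W]
  have haW : a ∈ W := (hW a).2 (fun h => hirr _ h.1)
  have hbW : b ∈ W := (hW b).2 (fun h => hirr _ h.2)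
  let o : V → ℕ := fun v => (Fintype.equivFin V v : ℕ)
  have ho : Function.Injective o := fun u v h => (Fintype.equivFin V).injective (Fin.ext h)
  let z : Finset V → MvPolynomial V K := fun T =>
    if T = W \ {a, b} then monomial (ind {a, b}) 1 else 0
  have hzh : ∀ T, (z T).IsHomogeneous 2 := by
    intro T
    simp only [z]
    split_ifs
    · apply isHomogeneous_monomial
      simp [ind, Finset.sum_pair hab]
    · exact isHomogeneous_zero _ _ _
  have hzi : ∀ T, ∑ v ∈ Tᶜ, (-1) ^ kcnt o v T * X v * z (insert v T) ∈ srIdeal K Δ := by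
    intro T
    refine Ideal.sum_mem _ fun v hv => ?_
    by_cases hT : insert v T = W \ {a, b}
    · simp only [z, if_pos hT]
      have hv' : v ∈ W \ {a, b} := by rw [← hT]; exact Finset.mem_insert_self _ _
      rw [mul_assoc]
      refine Ideal.mul_mem_left _ _ ?_
      refine Ideal.subset_span ⟨insert v {a, b}, ?_, ?_⟩
      · intro hmem
        rw [Finset.mem_sdiff] at hv'
        simp only [Finset.mem_insert, Finset.mem_singleton, not_or] at hv'
        refine (hW v).1 hv'.1 ⟨⟨Ne.symm hv'.2.1, hΔ.2 _ hmem _ ?_⟩,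
          ⟨Ne.symm hv'.2.2, hΔ.2 _ hmem _ ?_⟩⟩
        · intro t; simp; tauto
        · intro t; simp; tauto
      · show ∏ t ∈ insert v {a, b}, X t = _
        rw [Finset.prod_insert (Finset.mem_sdiff.1 hv').2, prod_X_eq]
    · simp only [z, if_neg hT, mul_zero]
      exact Ideal.zero_mem _
  obtain ⟨y, hy⟩ := chase_main A o ho z
    (fun T => by rw [homogeneousComponent_of_mem (hzh T)]; simp)
    (fun T => by rw [homogeneousComponent_of_mem (hzh T)]; simp) hzi
  let f : V → K := fun p => (-1) ^ kcnt o p W * coeff (Finsupp.single p 1) (y (W.erase p))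
  have key : ∀ p ∈ W, ∀ q ∈ W, adj p q →
      (f p = f q ↔ coeff (ind {p, q}) (z (W \ {p, q})) = 0) := by
    intro p hp q hq hpq
    have h1 := sr_coeff hΔ (hy (W \ {p, q})) _ hpq.2
    rw [coeff_sub, coeff_pair_sum o y W p q hp hq hpq.1, sub_eq_zero] at h1
    rw [h1]
    exact (sign_edge o ho W p q hp hq hpq.1 _ _).symm
  have hfab : f a ≠ f b := by
    intro h
    have := (key a haW b hbW ⟨hab, habΔ⟩).1 h
    simp [z] at this
  refine ⟨fun u => f u = f a, rfl, fun h => hfab h.symm, ?_⟩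
  intro u w hu hw huw huW hwW
  have huW' := (hW u).2 huW
  have hwW' := (hW w).2 hwW
  have hne : ¬ (W \ {u, w} = W \ {a, b}) → False := by
    intro hne
    have := (key u huW' w hwW' huw).2 (by simp only [z, if_neg hne, coeff_zero])
    exact hw (this.symm.trans hu)
  have heq : W \ {u, w} = W \ {a, b} := by
    by_contra h; exact hne h
  have hmem : ∀ t ∈ W, (t = u ∨ t = w ↔ t = a ∨ t = b) := by
    intro t ht
    have h1 : t ∈ W \ {u, w} ↔ t ∈ W \ {a, b} := by rw [heq]
    simp only [Finset.mem_sdiff, ht, true_and, Finset.mem_insert, Finset.mem_singleton] at h1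
    exact not_iff_not.1 h1
  have hu' := (hmem u huW').1 (Or.inl rfl)
  have hw' := (hmem w hwW').1 (Or.inr rfl)
  rcases hu' with rfl | rfl
  · rcases hw' with rfl | rfl
    · exact absurd rfl huw.1
    · exact ⟨rfl, rfl⟩
  · exact absurd hu.symm hfab

lemma gt_of_lin {Δ : Set (Finset V)} (hΔ : IsSimplicialComplex Δ) (A : LinRes 2 (srIdeal K Δ)) :
    ∀ (n : ℕ) (U : Finset V), U.card = n → IsGeneralizedTree U {S | S ∈ Δ ∧ S ⊆ U} := by
  classical
  have hclique : ∀ F : Finset V, (∀ p ∈ F, ∀ q ∈ F, p ≠ q → ({p, q} : Finset V) ∈ Δ) → F ∈ Δ := by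
    intro F hF
    by_contra h
    obtain ⟨p, hp, q, hq, hpq, h⟩ := flag_of_lin hΔ A F h
    exact h (hF p hp q hq hpq)
  intro n
  induction n with
  | zero =>
    intro U hU
    rw [Finset.card_eq_zero] at hU
    subst hU
    have : {S | S ∈ Δ ∧ S ⊆ (∅ : Finset V)} = {S | S ⊆ (∅ : Finset V)} := by
      ext S
      constructor
      · exact fun h => h.2
      · intro h
        refine ⟨?_, h⟩
        have h' : S = ∅ := Finset.subset_empty.1 h
        rw [h']
        exact hclique ∅ (by simp)
    rw [this]
    exact IsGeneralizedTree.simplex _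
  | succ n ih =>
    intro U hU
    obtain ⟨x, hx, hsx⟩ := exists_simplicial
      (adj := fun u w : V => u ≠ w ∧ ({u, w} : Finset V) ∈ Δ)
      (fun u w h => ⟨h.1.symm, by rw [Finset.pair_comm]; exact h.2⟩) (fun u h => h.1 rfl)
      (separation hΔ A) U (Finset.card_pos.1 (by omega))
    let F : Finset V := U.filter (fun w => x ≠ w ∧ ({x, w} : Finset V) ∈ Δ)
    have hFm : ∀ t, t ∈ F ↔ t ∈ U ∧ x ≠ t ∧ ({x, t} : Finset V) ∈ Δ := by
      intro t; simp only [F, Finset.mem_filter]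
    have hF1 : insert x F ∈ Δ := by
      refine hclique _ fun p hp q hq hpq => ?_
      rcases Finset.mem_insert.1 hp with rfl | hp
      · rcases Finset.mem_insert.1 hq with rfl | hq
        · exact absurd rfl hpq
        · exact ((hFm q).1 hq).2.2
      · rcases Finset.mem_insert.1 hq with rfl | hq
        · rw [Finset.pair_comm]; exact ((hFm p).1 hp).2.2
        · exact (hsx p ((hFm p).1 hp).1 q ((hFm q).1 hq).1 ((hFm p).1 hp).2 ((hFm q).1 hq).2
            hpq).2
    have hF0 : F ∈ Δ := hΔ.2 _ hF1 _ (Finset.subset_insert _ _)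
    have hFU : F ⊆ U.erase x := by
      intro t ht
      exact Finset.mem_erase.2 ⟨((hFm t).1 ht).2.1.symm, ((hFm t).1 ht).1⟩
    have h := IsGeneralizedTree.cone (U.erase x) _ F x
      (ih (U.erase x) (by rw [Finset.card_erase_of_mem hx]; omega)) ⟨hF0, hFU⟩
      (Finset.notMem_erase _ _)
    rw [Finset.insert_erase hx] at h
    convert h using 1
    ext S
    constructor
    · rintro ⟨hS, hSU⟩
      by_cases hxS : x ∈ S
      · right
        intro t ht
        rw [Finset.mem_insert]
        by_cases htx : t = x
        · exact Or.inl htx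
        · refine Or.inr ((hFm t).2 ⟨hSU ht, Ne.symm htx, hΔ.2 _ hS _ ?_⟩)
          intro r hr
          rcases Finset.mem_insert.1 hr with rfl | hr
          · exact hxS
          · rw [Finset.mem_singleton.1 hr]; exact ht
      · left
        exact ⟨hS, fun t ht => Finset.mem_erase.2 ⟨fun h => hxS (h ▸ ht), hSU ht⟩⟩
    · rintro (⟨hS, hSU⟩ | hS)
      · exact ⟨hS, hSU.trans (Finset.erase_subset _ _)⟩
      · refine ⟨hΔ.2 _ hF1 _ hS, fun t ht => ?_⟩
        rcases Finset.mem_insert.1 (hS ht) with rfl | h'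
        · exact hx
        · exact ((hFm t).1 h').1

end Sep

/-- STATEMENT 13 (Lemma 1): for any simplicial complex `Δ` (on the vertex set `X`) which
is not a simplex, and any field `K`, the Stanley-Reisner ring `K[Δ]` has a 2-linear
resolution if and only if `Δ` is a generalized tree. -/
theorem hasTwoLinearResolution_iff_isGeneralizedTree
    {V : Type*} [Fintype V] [DecidableEq V] (K : Type*) [Field K]
    (Δ : Set (Finset V)) (hΔ : IsSimplicialComplex Δ) (hns : Δ ≠ Set.univ) :
    HasTwoLinearResolution K Δ ↔ IsGeneralizedTree Finset.univ Δ := by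
  constructor
  · intro h
    obtain ⟨A⟩ := linRes_of_hasTwo Δ h
    have := gt_of_lin hΔ A _ Finset.univ rfl
    simpa using this
  · exact hasTwo_of_gt Δ
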